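/- Let N>1 be an integer. Then c(N)=0 if and only if one of the following holds: (1) ω(N) ≤ 3, i.e., N has at most three distinct prime factors; or (2) ω(N) = 4 and N is odd, i.e., N has exactly four distinct prime factors and its smallest prime factor is at least 3. -/

import Mathlib

namespace Paper

noncomputable section

/-- Closed disk attached to a rational `α = a/b` in lowest terms:
center `α`, radius `1/b`. -/
def disk (α : ℚ) : Set ℂ := Metric.closedBall (α : ℂ) (1 / (α.den : ℝ))

/-- The closed disk `D_{a/b}` of radius `1/b` centered at `a/b`. -/
def diskAt (a b : ℕ) : Set ℂ := Metric.closedBall ((a : ℂ) / (b : ℂ)) (1 / (b : ℝ))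

/-- The north pole `P_α = a/b + i/b` of the disk of `α = a/b` in lowest terms. -/
def northPole (α : ℚ) : ℂ := (α : ℂ) + Complex.I / (α.den : ℂ)

/-- Complexity of the north pole of `α` relative to a set `S` of rationals:
the number of `β ∈ S`, `β ≠ α`, whose disk contains `P_α`. -/
def poleComplexity (S : Set ℚ) (α : ℚ) : ℕ :=
  {β ∈ S | β ≠ α ∧ northPole α ∈ disk β}.ncard

/-- Rationals `a/b ∈ [0,1]` in lowest terms with `N ∣ b`. -/
def cand (N : ℕ) : Set ℚ := {α | 0 ≤ α ∧ α ≤ 1 ∧ N ∣ α.den}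

/-- The region `R_N`. -/
def RN (N : ℕ) : Set ℂ := ⋃ α ∈ cand N, disk α

/-- The set `S_N`: those `α` whose disk is not covered by the other disks. -/
def SSet (N : ℕ) : Set ℚ :=
  {α | α ∈ cand N ∧ ¬ disk α ⊆ ⋃ β ∈ cand N \ {α}, disk β}

/-- The complexity `c(N)`: the maximum of the complexities of north poles of `α ∈ S_N`. -/
def cN (N : ℕ) : ℕ := sSup (poleComplexity (SSet N) '' SSet N)

theorem mem_disk_iff (α : ℚ) (z : ℂ) :
    z ∈ disk α ↔ (z.re - α) ^ 2 + z.im ^ 2 ≤ (1 / (α.den : ℝ)) ^ 2 := by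
  have h0 : (0 : ℝ) ≤ 1 / (α.den : ℝ) := by positivity
  rw [disk, Metric.mem_closedBall, Complex.dist_eq_re_im, Real.sqrt_le_left h0]
  simp

theorem northPole_re (α : ℚ) : (northPole α).re = α := by
  simp [northPole, Complex.div_re]

theorem northPole_im (α : ℚ) : (northPole α).im = 1 / (α.den : ℝ) := by
  have h : (α.den : ℝ) ≠ 0 := by exact_mod_cast α.den_nz
  simp [northPole, Complex.div_im, Complex.normSq]

/-- Integer coordinates of a candidate: `α = a / (N b)` in lowest terms. -/
theorem exists_coords_of_mem_cand {N : ℕ} {α : ℚ} (hα : α ∈ cand N) :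
    ∃ a b : ℤ, 0 < b ∧ (α.den : ℝ) = N * b ∧ IsCoprime a (N : ℤ) ∧ IsCoprime a b ∧
      0 ≤ a ∧ a ≤ N * b ∧ (α : ℝ) = a / (N * b) := by
  obtain ⟨h0, h1, b, hb⟩ := hα
  have hbpos : 0 < b := by
    rcases Nat.eq_zero_or_pos b with h | h
    · exact absurd (by simp [hb, h]) α.den_nz
    · exact h
  have hcop : IsCoprime α.num ((N : ℤ) * b) := by
    have := α.isCoprime_num_den
    rw [hb] at this
    exact_mod_cast this
  have hval : α = α.num / (N * b) := by
    conv_lhs => rw [← Rat.num_div_den α, hb]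
    push_cast
    rfl
  refine ⟨α.num, b, by exact_mod_cast hbpos, by rw [hb]; push_cast; rfl,
    hcop.of_mul_right_left, hcop.of_mul_right_right, Rat.num_nonneg.2 h0, ?_, ?_⟩
  · have := Rat.num_le_denom_iff.2 h1
    rw [hb] at this
    exact_mod_cast this
  · conv_lhs => rw [hval]
    push_cast
    rfl

/-- A fraction `c / (N d)` with `c` prime to `N` is a candidate, of denominator at most `N d`. -/
theorem div_mem_cand {N : ℕ} (hN : 0 < N) {c d : ℤ} (hd : 0 < d) (hc : IsCoprime c (N : ℤ))
    (h0 : 0 ≤ c) (h1 : c ≤ N * d) :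
    (c / (N * d) : ℚ) ∈ cand N ∧ ((c / (N * d) : ℚ).den : ℝ) ≤ N * d ∧
      (IsCoprime c d → ((c / (N * d) : ℚ).den : ℝ) = N * d) := by
  have hN' : (0 : ℤ) < N := by exact_mod_cast hN
  have hpos : 0 < (N : ℤ) * d := by positivity
  have hq : (0 : ℚ) < N * d := by exact_mod_cast hpos
  have e : (c / (N * d) : ℚ) = (c : ℚ) / (((N : ℤ) * d : ℤ) : ℚ) := by push_cast; rfl
  have hdvd : (((c / (N * d) : ℚ).den : ℤ)) ∣ (N : ℤ) * d := by
    rw [e, ← Rat.divInt_eq_div]; exact Rat.den_dvd c _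
  refine ⟨⟨by positivity, ?_, ?_⟩, ?_, ?_⟩
  · rw [div_le_one hq]; exact_mod_cast h1
  · set q : ℚ := c / (N * d) with hqdef
    have hm : q.num * ((N : ℤ) * d) = c * q.den := by
      have h2 : q * (N * d) = c := by rw [hqdef]; field_simp
      have h3 : (q.num : ℚ) = q * q.den := (Rat.mul_den_eq_num q).symm
      have : (q.num : ℚ) * (N * d) = c * q.den := by rw [h3, ← h2]; ring
      exact_mod_cast this
    have : (N : ℤ) ∣ c * q.den := ⟨q.num * d, by rw [← hm]; ring⟩
    exact_mod_cast hc.symm.dvd_of_dvd_mul_left this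
  · exact_mod_cast Int.le_of_dvd hpos hdvd
  · intro h
    have hcop : IsCoprime c ((N : ℤ) * d) := hc.mul_right h
    have := Rat.den_div_eq_of_coprime hpos (Int.isCoprime_iff_gcd_eq_one.1 hcop)
    rw [← e] at this
    exact_mod_cast this

/-- The disk of radius `1/b` about `k/b` (in the coordinate `N z - m`), where `0 < k/b < 1`, is not
covered by the other disks that come from numerators prime to `N`. -/
def Uncovered (N : ℕ) (m k b : ℤ) : Prop :=
  0 < k ∧ k < b ∧ IsCoprime k b ∧ IsCoprime (b * m + k) (N : ℤ) ∧
    ∃ x y : ℝ, (x - k / b) ^ 2 + y ^ 2 ≤ (1 / b : ℝ) ^ 2 ∧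
      ∀ l d : ℤ, 0 < d → 0 ≤ l → l ≤ d → l * b ≠ k * d → IsCoprime (d * m + l) (N : ℤ) →
        (1 / d : ℝ) ^ 2 < (x - l / d) ^ 2 + y ^ 2

theorem uncovered_of_mem_SSet {N : ℕ} (hN : 1 < N) {α : ℚ} (hα : α ∈ SSet N) :
    ∃ m k b : ℤ, 0 ≤ m ∧ m < N ∧ 0 ≤ k ∧ k < b ∧ 0 < b ∧ (α.den : ℝ) = N * b ∧
      (α : ℝ) = (b * m + k) / (N * b) ∧ IsCoprime (b * m + k) (N : ℤ) ∧ IsCoprime k b ∧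
      (1 < b → Uncovered N m k b) := by
  have hN0 : 0 < N := by omega
  obtain ⟨hc, hcov⟩ := hα
  obtain ⟨a, b, hb, hden, haN, hab, ha0, ha1, hval⟩ := exists_coords_of_mem_cand hc
  have hNR : (0 : ℝ) < N := by exact_mod_cast hN0
  have hbR : (0 : ℝ) < b := by exact_mod_cast hb
  have ha2 : a < N * b := by
    refine lt_of_le_of_ne ha1 fun h => ?_
    rw [h] at haN
    have := haN.of_mul_left_left
    rw [isCoprime_self, Int.isUnit_iff] at this
    omega
  have hdm : b * (a / b) + a % b = a := Int.mul_ediv_add_emod a b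
  have hk0 := Int.emod_nonneg a hb.ne'
  have hk1 := Int.emod_lt_of_pos a hb
  have hm0 : 0 ≤ a / b := Int.ediv_nonneg ha0 hb.le
  have hm1 : a / b < N := Int.ediv_lt_of_lt_mul hb ha2
  generalize a / b = m at *
  generalize a % b = k at *
  subst hdm
  have hkb : IsCoprime k b := by
    rw [add_comm] at hab
    exact (IsCoprime.add_mul_left_left_iff).1 hab
  push_cast at hval
  refine ⟨m, k, b, hm0, hm1, hk0, hk1, hb, hden, hval, haN, hkb, fun h1b => ⟨?_, hk1, hkb, haN, ?_⟩⟩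
  · refine lt_of_le_of_ne hk0 fun h => ?_
    rw [← h, isCoprime_zero_left, Int.isUnit_iff] at hkb
    omega
  · obtain ⟨z, hz, hz'⟩ := Set.not_subset.1 hcov
    rw [mem_disk_iff, hden, hval] at hz
    refine ⟨N * z.re - m, N * z.im, ?_, fun l d hd hl0 hl1 hne hcop => ?_⟩
    · have e1 : (N * z.re - m - k / b : ℝ) = N * (z.re - (b * m + k) / (N * b)) := by
        field_simp
        ring
      have e2 : (1 / b : ℝ) = N * (1 / (N * b)) := by field_simp
      rw [e1, e2, mul_pow, mul_pow, mul_pow, ← mul_add]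
      gcongr
    · have hdR : (0 : ℝ) < d := by exact_mod_cast hd
      obtain ⟨hβ, hβd, -⟩ := div_mem_cand hN0 hd hcop (by positivity)
        (by nlinarith [mul_le_mul_of_nonneg_left (show m + 1 ≤ N by omega) hd.le])
      set β : ℚ := ((d * m + l : ℤ) / (N * d) : ℚ) with hβdef
      have hβval : (β : ℝ) = (d * m + l) / (N * d) := by rw [hβdef]; push_cast; rfl
      have hβα : β ≠ α := by
        intro h
        apply hne
        have h2 : (β : ℝ) = α := by rw [h]
        rw [hβval, hval] at h2
        have h3 : (l * b : ℝ) = k * d := by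
          field_simp at h2
          linarith
        exact_mod_cast h3
      have hzβ : z ∉ disk β := fun h => hz' (Set.mem_biUnion ⟨hβ, hβα⟩ h)
      rw [mem_disk_iff, not_le] at hzβ
      have hβpos : (0 : ℝ) < β.den := by exact_mod_cast β.den_pos
      have e1 : (N * z.re - m - l / d : ℝ) = N * (z.re - β) := by
        rw [hβval]
        field_simp
        ring
      have e2 : (1 / d : ℝ) = N * (1 / (N * d)) := by field_simp
      rw [e1, e2, mul_pow, mul_pow, mul_pow, ← mul_add]
      refine mul_lt_mul_of_pos_left (lt_of_le_of_lt ?_ hzβ) (by positivity)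
      gcongr

namespace Uncovered

variable {N : ℕ} {m k b : ℤ}

theorem reflect (h : Uncovered N m k b) : Uncovered N (-m - 1) (b - k) b := by
  obtain ⟨h0, h1, h2, h3, x, y, hxy, hl⟩ := h
  have hb : (0 : ℝ) < b := by exact_mod_cast h0.trans h1
  refine ⟨by omega, by omega, ?_, ?_, 1 - x, y, ?_, fun l d hd hl0 hl1 hne hcop => ?_⟩
  · have := h2.neg_left.add_mul_left_left 1
    rwa [show -k + b * 1 = b - k by ring] at this
  · have := h3.neg_left
    rwa [show -(b * m + k) = b * (-m - 1) + (b - k) by ring] at this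
  · convert hxy using 2
    push_cast
    field_simp
    ring
  · have hdR : (0 : ℝ) < d := by exact_mod_cast hd
    have := hl (d - l) d hd (by omega) (by omega) (fun h => hne (by linarith)) (by
      have := hcop.neg_left
      rwa [show -(d * (-m - 1) + l) = d * m + (d - l) by ring] at this)
    convert this using 2
    push_cast
    field_simp
    ring

theorem not_covered (h : Uncovered N m k b) {l d : ℤ} (hd : 0 < d) (hl0 : 0 ≤ l) (hl1 : l ≤ d)
    (hdb : d < b) (hcop : IsCoprime (d * m + l) (N : ℤ)) (h1 : k * d - b * l + d ≤ b)
    (h2 : b * l - k * d + d ≤ b) : False := by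
  obtain ⟨hk0, hk1, hkb, -, x, y, hxy, hl⟩ := h
  have hbR : (0 : ℝ) < b := by exact_mod_cast hk0.trans hk1
  have hdR : (0 : ℝ) < d := by exact_mod_cast hd
  have hne : l * b ≠ k * d := by
    intro he
    have : b ∣ d := hkb.symm.dvd_of_dvd_mul_left ⟨l, by rw [← he]; ring⟩
    exact absurd (Int.le_of_dvd hd this) (by omega)
  have key := hl l d hd hl0 hl1 hne hcop
  have h1R : (k * d - b * l + d : ℝ) ≤ b := by exact_mod_cast h1
  have h2R : (b * l - k * d + d : ℝ) ≤ b := by exact_mod_cast h2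
  have hδ : |(k / b - l / d : ℝ)| ≤ 1 / d - 1 / b := by
    rw [abs_le]
    constructor
    · rw [← sub_nonneg]
      have : (k / b - l / d : ℝ) - -(1 / d - 1 / b) = (b - (b * l - k * d + d)) / (b * d) := by
        field_simp; ring
      rw [this]
      exact div_nonneg (by linarith) (by positivity)
    · rw [← sub_nonneg]
      have : (1 / d - 1 / b : ℝ) - (k / b - l / d) = (b - (k * d - b * l + d)) / (b * d) := by
        field_simp; ring
      rw [this]
      exact div_nonneg (by linarith) (by positivity)
  set δ : ℝ := k / b - l / d with hδdef
  have hx : |x - k / b| ≤ 1 / b := abs_le_of_sq_le_sq (by nlinarith [sq_nonneg y]) (by positivity)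
  have hprod : (x - k / b) * δ ≤ 1 / b * |δ| := by
    calc (x - k / b) * δ ≤ |(x - k / b) * δ| := le_abs_self _
      _ = |x - k / b| * |δ| := abs_mul _ _
      _ ≤ _ := by gcongr
  have e : (x - l / d : ℝ) = (x - k / b) + δ := by rw [hδdef]; ring
  rw [e] at key
  have h3 : (1 / b + |δ|) ^ 2 ≤ (1 / d : ℝ) ^ 2 := by
    have : 1 / b + |δ| ≤ (1 / d : ℝ) := by linarith
    gcongr
  nlinarith [sq_abs δ]

end Uncovered

theorem isCoprime_natCast_of_forall_prime {N : ℕ} {x : ℤ}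
    (h : ∀ p : ℕ, p.Prime → p ∣ N → ¬ (p : ℤ) ∣ x) : IsCoprime x (N : ℤ) := by
  rw [Int.isCoprime_iff_gcd_eq_one]
  exact Nat.Coprime.symm (Nat.coprime_of_dvd fun p hp hpN hpx =>
    h p hp hpN (Int.natCast_dvd.2 hpx))

theorem exists_prime_of_not_isCoprime {N : ℕ} {x : ℤ} (h : ¬ IsCoprime x (N : ℤ)) :
    ∃ p : ℕ, p.Prime ∧ p ∣ N ∧ (p : ℤ) ∣ x := by
  by_contra! h'
  exact h (isCoprime_natCast_of_forall_prime h')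

namespace Uncovered

variable {N : ℕ} {m k b : ℤ}

theorem not_two_covered (h : Uncovered N m k b) {l d l' d' : ℤ} (hd : 0 < d) (hl0 : 0 ≤ l)
    (hl1 : l ≤ d) (hcop : IsCoprime (d * m + l) (N : ℤ)) (hne : l * b ≠ k * d) (hd' : 0 < d')
    (hl0' : 0 ≤ l') (hl1' : l' ≤ d') (hcop' : IsCoprime (d' * m + l') (N : ℤ))
    (hne' : l' * b ≠ k * d')
    (hc : ∀ x : ℝ, (x - l / d) ^ 2 - (x - k / b) ^ 2 ≤ (1 / d) ^ 2 - (1 / b) ^ 2 ∨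
      (x - l' / d') ^ 2 - (x - k / b) ^ 2 ≤ (1 / d') ^ 2 - (1 / b) ^ 2) : False := by
  obtain ⟨-, -, -, -, x, y, hxy, hl⟩ := h
  have h1 := hl l d hd hl0 hl1 hne hcop
  have h2 := hl l' d' hd' hl0' hl1' hne' hcop'
  rcases hc x with h | h <;> linarith

theorem not_isCoprime_zero (h : Uncovered N m k b) : ¬ IsCoprime m (N : ℤ) := by
  intro hc
  have h0 := h.1
  have h1 := h.2.1
  exact h.not_covered (l := 0) (d := 1) (by norm_num) (by norm_num) (by norm_num) (by omega)
    (by simpa using hc) (by omega) (by omega)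

theorem not_isCoprime_one (h : Uncovered N m k b) : ¬ IsCoprime (m + 1) (N : ℤ) := by
  intro hc
  have h0 := h.1
  have h1 := h.2.1
  exact h.not_covered (l := 1) (d := 1) (by norm_num) (by norm_num) (by norm_num) (by omega)
    (by simpa using hc) (by omega) (by omega)

theorem not_isCoprime_half (h : Uncovered N m k b) (hb : 3 ≤ b) :
    ¬ IsCoprime (2 * m + 1) (N : ℤ) := by
  intro hc
  have h0 := h.1
  have h1 := h.2.1
  exact h.not_covered (l := 1) (d := 2) (by norm_num) (by norm_num) (by norm_num) (by omega)
    hc (by omega) (by omega)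

theorem eq_of_mul_eq_mul (h : Uncovered N m k b) {l d : ℤ} (hld : IsCoprime l d) (hd : 0 < d)
    (he : k * d = l * b) : k = l ∧ b = d := by
  have h0 := h.1
  have h1 := h.2.1
  have hkb := h.2.2.1
  have e1 : b ∣ d := hkb.symm.dvd_of_dvd_mul_left ⟨l, by rw [he]; ring⟩
  have e2 : d ∣ b := hld.symm.dvd_of_dvd_mul_left ⟨k, by rw [← he]; ring⟩
  have e3 : b = d := le_antisymm (Int.le_of_dvd hd e1) (Int.le_of_dvd (by omega) e2)
  subst e3
  exact ⟨mul_right_cancel₀ (by omega) he, rfl⟩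

theorem two_mul_ne (h : Uncovered N m k b) (hb : 3 ≤ b) : 2 * k ≠ b := by
  intro he
  have := h.eq_of_mul_eq_mul (l := 1) (d := 2) isCoprime_one_left (by norm_num) (by omega)
  omega

/-- The disk about `1/3` swallows everything strictly between `0` and `1/2`. -/
theorem lt_half (h : Uncovered N m k b) (hb : 3 ≤ b) (hc : IsCoprime (3 * m + 1) (N : ℤ))
    (hk : 2 * k ≤ b) : k = 1 ∧ b = 3 := by
  have h0 := h.1
  have := h.two_mul_ne hb
  by_contra hne
  exact h.not_covered (l := 1) (d := 3) (by norm_num) (by norm_num) (by norm_num)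
    (by omega) hc (by omega) (by omega)

theorem gt_half (h : Uncovered N m k b) (hb : 3 ≤ b) (hc : IsCoprime (3 * m + 2) (N : ℤ))
    (hk : b ≤ 2 * k) : k = 2 ∧ b = 3 := by
  have h0 := h.1
  have h1 := h.2.1
  have := h.two_mul_ne hb
  by_contra hne
  exact h.not_covered (l := 2) (d := 3) (by norm_num) (by norm_num) (by norm_num)
    (by omega) hc (by omega) (by omega)

/-- Classification when `1/3`, `3/5` and `3/4` are available and `2/3` is not. -/
theorem eq_third_or_three_quarters (h : Uncovered N m k b) (hb : 3 ≤ b)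
    (h13 : IsCoprime (3 * m + 1) (N : ℤ)) (h23 : ¬ IsCoprime (3 * m + 2) (N : ℤ))
    (h35 : IsCoprime (5 * m + 3) (N : ℤ)) (h34 : IsCoprime (4 * m + 3) (N : ℤ)) :
    (k = 1 ∧ b = 3) ∨ (k = 3 ∧ b = 4) := by
  by_contra! hcon
  have h0 := h.1
  have h1 := h.2.1
  have hhalf : b < 2 * k := by
    by_contra! hle
    obtain ⟨rfl, rfl⟩ := h.lt_half hb h13 hle
    omega
  rcases lt_trichotomy (3 * k) (2 * b) with hlt | heq | hgt
  · by_cases h5 : k = 3 ∧ b = 5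
    · obtain ⟨rfl, rfl⟩ := h5
      refine h.not_two_covered (l := 1) (d := 3) (l' := 3) (d' := 4) (by norm_num) (by norm_num)
        (by norm_num) h13 (by norm_num) (by norm_num) (by norm_num) (by norm_num) h34
        (by norm_num) fun x => ?_
      rcases le_total x (3 / 5) with hx | hx
      · left; push_cast; nlinarith
      · right; push_cast; nlinarith
    · exact h.not_covered (l := 3) (d := 5) (by norm_num) (by norm_num) (by norm_num)
        (by omega) h35 (by omega) (by omega)
  · obtain ⟨rfl, rfl⟩ := h.eq_of_mul_eq_mul (l := 2) (d := 3) (by norm_num) (by norm_num)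
      (by omega)
    exact h23 h.2.2.2.1
  · exact h.not_covered (l := 3) (d := 4) (by norm_num) (by norm_num) (by norm_num)
      (by omega) h34 (by omega) (by omega)

/-- Classification when `1/3`, `4/7`, `5/8`, `5/7` and `4/5` are available and `2/3`, `3/5`, `3/4`
are not. -/
theorem eq_third_or_four_fifths (h : Uncovered N m k b) (hb : 3 ≤ b)
    (h13 : IsCoprime (3 * m + 1) (N : ℤ)) (h23 : ¬ IsCoprime (3 * m + 2) (N : ℤ))
    (h35 : ¬ IsCoprime (5 * m + 3) (N : ℤ)) (h34 : ¬ IsCoprime (4 * m + 3) (N : ℤ))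
    (h47 : IsCoprime (7 * m + 4) (N : ℤ)) (h58 : IsCoprime (8 * m + 5) (N : ℤ))
    (h57 : IsCoprime (7 * m + 5) (N : ℤ)) (h45 : IsCoprime (5 * m + 4) (N : ℤ)) :
    (k = 1 ∧ b = 3) ∨ (k = 4 ∧ b = 5) := by
  by_contra! hcon
  have h0 := h.1
  have h1 := h.2.1
  have hhalf : b < 2 * k := by
    by_contra! hle
    obtain ⟨rfl, rfl⟩ := h.lt_half hb h13 hle
    omega
  have not_eq : ∀ l d : ℤ, IsCoprime l d → 0 < d → ¬ IsCoprime (d * m + l) (N : ℤ) →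
      k * d ≠ l * b := by
    rintro l d hld hd hnc he
    obtain ⟨rfl, rfl⟩ := h.eq_of_mul_eq_mul hld hd he
    exact hnc h.2.2.2.1
  have n23 := not_eq 2 3 (by norm_num) (by norm_num) h23
  have n35 := not_eq 3 5 (by norm_num) (by norm_num) h35
  have n34 := not_eq 3 4 (by norm_num) (by norm_num) h34
  have two : ∀ l d : ℤ, k = l → b = d → 1 * d ≠ l * 3 → 4 * d ≠ l * 5 →
      (∀ x : ℝ, (x - (1 : ℤ) / (3 : ℤ)) ^ 2 - (x - l / d) ^ 2 ≤
          (1 / (3 : ℤ)) ^ 2 - (1 / d : ℝ) ^ 2 ∨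
        (x - (4 : ℤ) / (5 : ℤ)) ^ 2 - (x - l / d) ^ 2 ≤ (1 / (5 : ℤ)) ^ 2 - (1 / d : ℝ) ^ 2) →
      False := by
    rintro l d rfl rfl hne hne' hx
    exact h.not_two_covered (l := 1) (d := 3) (l' := 4) (d' := 5) (by norm_num) (by norm_num)
      (by norm_num) h13 hne (by norm_num) (by norm_num) (by norm_num) h45 hne' hx
  have tail : ∀ l d : ℤ, 5 < d → IsCoprime (d * m + l) (N : ℤ) → 0 ≤ l → l ≤ d →
      (∀ x : ℝ, (x - (1 : ℤ) / (3 : ℤ)) ^ 2 - (x - l / d) ^ 2 ≤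
          (1 / (3 : ℤ)) ^ 2 - (1 / d : ℝ) ^ 2 ∨
        (x - (4 : ℤ) / (5 : ℤ)) ^ 2 - (x - l / d) ^ 2 ≤ (1 / (5 : ℤ)) ^ 2 - (1 / d : ℝ) ^ 2) →
      1 * d ≠ l * 3 → 4 * d ≠ l * 5 →
      (¬ (k = l ∧ b = d) → d < b ∧ k * d - b * l + d ≤ b ∧ b * l - k * d + d ≤ b) → False := by
    intro l d hd hc hl0 hl1 hx hne hne' hcase
    by_cases he : k = l ∧ b = d
    · exact two l d he.1 he.2 hne hne' hx
    · obtain ⟨g1, g2, g3⟩ := hcase he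
      exact h.not_covered (by omega) hl0 hl1 g1 hc g2 g3
  rcases lt_or_gt_of_ne n23 with hlt | hgt
  · rcases lt_or_gt_of_ne n35 with hlt' | hgt'
    · refine tail 4 7 (by norm_num) h47 (by norm_num) (by norm_num) (fun x => ?_) (by norm_num)
        (by norm_num) (fun he => ⟨by omega, by omega, by omega⟩)
      rcases le_total x (9 / 14) with hx | hx
      · left; push_cast; nlinarith
      · right; push_cast; nlinarith
    · refine tail 5 8 (by norm_num) h58 (by norm_num) (by norm_num) (fun x => ?_) (by norm_num)
        (by norm_num) (fun he => ⟨by omega, by omega, by omega⟩)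
      rcases le_total x (9 / 14) with hx | hx
      · left; push_cast; nlinarith
      · right; push_cast; nlinarith
  · rcases lt_or_gt_of_ne n34 with hlt' | hgt'
    · refine tail 5 7 (by norm_num) h57 (by norm_num) (by norm_num) (fun x => ?_) (by norm_num)
        (by norm_num) (fun he => ⟨by omega, by omega, by omega⟩)
      rcases le_total x (9 / 14) with hx | hx
      · left; push_cast; nlinarith
      · right; push_cast; nlinarith
    · exact h.not_covered (l := 4) (d := 5) (by norm_num) (by norm_num) (by norm_num)
        (by omega) h45 (by omega) (by omega)

end Uncovered

theorem prime_eq_of_dvd_small {p : ℕ} (hp : p.Prime) {n : ℤ} (h0 : n ≠ 0) (h5 : |n| ≤ 5)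
    (h : (p : ℤ) ∣ n) : p = 2 ∨ p = 3 ∨ p = 5 := by
  have h1 : (p : ℤ) ∣ |n| := (dvd_abs _ _).2 h
  have hle : p ≤ 5 := by
    have := Int.le_of_dvd (abs_pos.2 h0) h1
    omega
  have := hp.two_le
  interval_cases p <;> first | omega | norm_num at hp

/-- If every prime factor of `N` divides one of `m`, `m+1`, `2m+1`, `3m+2`, then only `2, 3, 5` can
be common factors of `N` and `j m + i`, for small `i` and `j`. -/
theorem isCoprime_of_prime_cover {N : ℕ} {m : ℤ}
    (hcov : ∀ p : ℕ, p.Prime → p ∣ N →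
      (p : ℤ) ∣ m ∨ (p : ℤ) ∣ m + 1 ∨ (p : ℤ) ∣ 2 * m + 1 ∨ (p : ℤ) ∣ 3 * m + 2) (j i : ℤ)
    (h₁ : i ≠ 0 ∧ |i| ≤ 5) (h₂ : j - i ≠ 0 ∧ |j - i| ≤ 5) (h₃ : j - 2 * i ≠ 0 ∧ |j - 2 * i| ≤ 5)
    (h₄ : 2 * j - 3 * i ≠ 0 ∧ |2 * j - 3 * i| ≤ 5)
    (h2 : 2 ∣ N → ¬ (2 : ℤ) ∣ j * m + i) (h3 : 3 ∣ N → ¬ (3 : ℤ) ∣ j * m + i)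
    (h5 : 5 ∣ N → ¬ (5 : ℤ) ∣ j * m + i) : IsCoprime (j * m + i) (N : ℤ) := by
  refine isCoprime_natCast_of_forall_prime fun p hp hpN hpx => ?_
  have hsmall : p = 2 ∨ p = 3 ∨ p = 5 := by
    rcases hcov p hp hpN with hd | hd | hd | hd
    · refine prime_eq_of_dvd_small hp h₁.1 h₁.2 ?_
      have := hpx.sub (hd.mul_left j)
      rwa [show j * m + i - j * m = i by ring] at this
    · refine prime_eq_of_dvd_small hp h₂.1 h₂.2 ?_
      have := (hd.mul_left j).sub hpx
      rwa [show j * (m + 1) - (j * m + i) = j - i by ring] at this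
    · refine prime_eq_of_dvd_small hp h₃.1 h₃.2 ?_
      have := (hd.mul_left j).sub (hpx.mul_left 2)
      rwa [show j * (2 * m + 1) - 2 * (j * m + i) = j - 2 * i by ring] at this
    · refine prime_eq_of_dvd_small hp h₄.1 h₄.2 ?_
      have := (hd.mul_left j).sub (hpx.mul_left 3)
      rwa [show j * (3 * m + 2) - 3 * (j * m + i) = 2 * j - 3 * i by ring] at this
  rcases hsmall with rfl | rfl | rfl
  · exact h2 hpN hpx
  · exact h3 hpN hpx
  · exact h5 hpN hpx

/-- If every prime factor of `N` divides one of `m`, `m+1`, `2m+1`, `3m+2`, then the uncovered disks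
are among `1/3, 3/4`, or among `1/3, 4/5`, depending only on `m` and `N`. -/
theorem Uncovered.eq_or_eq_of_prime_cover {N : ℕ} {m k b : ℤ} (h : Uncovered N m k b) (hb : 3 ≤ b)
    (h13 : IsCoprime (3 * m + 1) (N : ℤ)) (h23 : ¬ IsCoprime (3 * m + 2) (N : ℤ))
    (hcov : ∀ p : ℕ, p.Prime → p ∣ N →
      (p : ℤ) ∣ m ∨ (p : ℤ) ∣ m + 1 ∨ (p : ℤ) ∣ 2 * m + 1 ∨ (p : ℤ) ∣ 3 * m + 2)
    (h2 : 2 ∣ N → (2 : ℤ) ∣ m)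
    (h3 : 3 ∣ N → (3 : ℤ) ∣ m → ¬ 2 ∣ N ∧ ¬ (5 ∣ N ∧ (5 : ℤ) ∣ m)) :
    if 3 ∣ N ∧ (3 : ℤ) ∣ m then (k = 1 ∧ b = 3) ∨ (k = 4 ∧ b = 5)
    else (k = 1 ∧ b = 3) ∨ (k = 3 ∧ b = 4) := by
  have hcov5 := hcov 5 (by norm_num)
  have hcop := isCoprime_of_prime_cover hcov
  split_ifs with hc
  · have n2 := h3 hc.1 hc.2
    have not_cop : ∀ x : ℤ, (3 : ℤ) ∣ x → ¬ IsCoprime x (N : ℤ) := by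
      intro x hx hcop
      have := hcop.isUnit_of_dvd' hx (by exact_mod_cast hc.1)
      rw [Int.isUnit_iff] at this
      omega
    refine h.eq_third_or_four_fifths hb h13 h23 (not_cop _ (by omega)) (not_cop _ (by omega))
      (hcop 7 4 ?_ ?_ ?_ ?_ ?_ ?_ ?_) (hcop 8 5 ?_ ?_ ?_ ?_ ?_ ?_ ?_)
      (hcop 7 5 ?_ ?_ ?_ ?_ ?_ ?_ ?_) (hcop 5 4 ?_ ?_ ?_ ?_ ?_ ?_ ?_)
    all_goals first | (norm_num; done) | omega
  · refine h.eq_third_or_three_quarters hb h13 h23 (hcop 5 3 ?_ ?_ ?_ ?_ ?_ ?_ ?_)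
      (hcop 4 3 ?_ ?_ ?_ ?_ ?_ ?_ ?_)
    all_goals first | (norm_num; done) | omega

/-- Arithmetic content of the prime count: blocking `0, 1, 1/2, 2/3` uses up all prime factors. -/
theorem prime_cover_of_card {N : ℕ} (hN0 : N ≠ 0)
    (hω : N.primeFactors.card ≤ 3 ∨ (N.primeFactors.card = 4 ∧ Odd N)) {m : ℤ}
    (h0 : ¬ IsCoprime m (N : ℤ)) (h1 : ¬ IsCoprime (m + 1) (N : ℤ))
    (h12 : ¬ IsCoprime (2 * m + 1) (N : ℤ)) (h23 : ¬ IsCoprime (3 * m + 2) (N : ℤ)) :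
    IsCoprime (3 * m + 1) (N : ℤ) ∧
    (∀ p : ℕ, p.Prime → p ∣ N →
      (p : ℤ) ∣ m ∨ (p : ℤ) ∣ m + 1 ∨ (p : ℤ) ∣ 2 * m + 1 ∨ (p : ℤ) ∣ 3 * m + 2) ∧
    (2 ∣ N → (2 : ℤ) ∣ m) ∧
    (3 ∣ N → (3 : ℤ) ∣ m → ¬ 2 ∣ N ∧ ¬ (5 ∣ N ∧ (5 : ℤ) ∣ m)) := by
  obtain ⟨p, hp, hpN, hpm⟩ := exists_prime_of_not_isCoprime h0
  obtain ⟨q, hq, hqN, hqm⟩ := exists_prime_of_not_isCoprime h1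
  obtain ⟨l, hl, hlN, hlm⟩ := exists_prime_of_not_isCoprime h12
  obtain ⟨t, ht, htN, htm⟩ := exists_prime_of_not_isCoprime h23
  have not_one : ∀ s : ℕ, s.Prime → ¬ (s : ℤ) ∣ 1 := fun s hs h => by
    have : s ∣ 1 := by exact_mod_cast h
    exact hs.one_lt.ne' (Nat.dvd_one.1 this)
  have hpq : p ≠ q := by
    rintro rfl
    exact not_one p hp (by simpa using hqm.sub hpm)
  have hpl : p ≠ l := by
    rintro rfl
    exact not_one p hp (by simpa using hlm.sub (hpm.mul_left 2))
  have hql : q ≠ l := by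
    rintro rfl
    refine not_one q hq ?_
    have := (hqm.mul_left 2).sub hlm
    rwa [show 2 * (m + 1) - (2 * m + 1) = 1 by ring] at this
  have hqt : q ≠ t := by
    rintro rfl
    refine not_one q hq ?_
    have := (hqm.mul_left 3).sub htm
    rwa [show 3 * (m + 1) - (3 * m + 2) = 1 by ring] at this
  have hlt : l ≠ t := by
    rintro rfl
    refine not_one l hl ?_
    have := (htm.mul_left 2).sub (hlm.mul_left 3)
    rwa [show 2 * (3 * m + 2) - 3 * (2 * m + 1) = 1 by ring] at this
  have hpt : p = t → p = 2 := by
    rintro rfl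
    have : (p : ℤ) ∣ 2 := by simpa using htm.sub (hpm.mul_left 3)
    exact (Nat.prime_dvd_prime_iff_eq hp Nat.prime_two).1 (by exact_mod_cast this)
  have mem : ∀ {s : ℕ}, s.Prime → s ∣ N → s ∈ N.primeFactors := fun hs hd =>
    Nat.mem_primeFactors.2 ⟨hs, hd, hN0⟩
  have hall : (∀ s : ℕ, s.Prime → s ∣ N → s = p ∨ s = q ∨ s = l ∨ s = t) ∧
      (¬ 2 ∣ N ∨ p = 2 ∧ t = 2) := by
    by_cases hpt' : p = t
    · have hp2 := hpt hpt'
      refine ⟨?_, Or.inr ⟨hp2, hpt' ▸ hp2⟩⟩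
      have h3 : ({p, q, l} : Finset ℕ).card = 3 :=
        Finset.card_eq_three.2 ⟨p, q, l, hpq, hpl, hql, rfl⟩
      have hsub : ({p, q, l} : Finset ℕ) ⊆ N.primeFactors := by
        intro s hs
        simp only [Finset.mem_insert, Finset.mem_singleton] at hs
        rcases hs with rfl | rfl | rfl
        exacts [mem hp hpN, mem hq hqN, mem hl hlN]
      have hcard : N.primeFactors.card ≤ 3 := by
        rcases hω with h | ⟨-, h⟩
        · exact h
        · rw [hp2] at hpN
          obtain ⟨r, hr⟩ := h
          omega
      have heq := Finset.eq_of_subset_of_card_le hsub (by omega)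
      intro s hs hsN
      have := mem hs hsN
      rw [← heq] at this
      simp only [Finset.mem_insert, Finset.mem_singleton] at this
      tauto
    · have h4 : ({p, q, l, t} : Finset ℕ).card = 4 := by simp [*]
      have hsub : ({p, q, l, t} : Finset ℕ) ⊆ N.primeFactors := by
        intro s hs
        simp only [Finset.mem_insert, Finset.mem_singleton] at hs
        rcases hs with rfl | rfl | rfl | rfl
        exacts [mem hp hpN, mem hq hqN, mem hl hlN, mem ht htN]
      have hle := Finset.card_le_card hsub
      have hodd : N.primeFactors.card = 4 ∧ Odd N := by
        rcases hω with h | h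
        · omega
        · exact h
      have heq := Finset.eq_of_subset_of_card_le hsub (by omega)
      refine ⟨fun s hs hsN => ?_, Or.inl ?_⟩
      · have := mem hs hsN
        rw [← heq] at this
        simpa only [Finset.mem_insert, Finset.mem_singleton] using this
      · obtain ⟨r, hr⟩ := hodd.2
        omega
  obtain ⟨hall, h2⟩ := hall
  refine ⟨?_, fun s hs hsN => ?_, fun h2N => ?_, fun h3N h3m => ⟨fun h2N => ?_, ?_⟩⟩
  · refine isCoprime_natCast_of_forall_prime fun s hs hsN hsm => ?_
    rcases hall s hs hsN with rfl | rfl | rfl | rfl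
    · exact not_one s hs (by simpa using hsm.sub (hpm.mul_left 3))
    · have hd : (s : ℤ) ∣ 2 := by
        have := (hqm.mul_left 3).sub hsm
        rwa [show 3 * (m + 1) - (3 * m + 1) = 2 by ring] at this
      have hs2 : s = 2 :=
        (Nat.prime_dvd_prime_iff_eq hs Nat.prime_two).1 (by exact_mod_cast hd)
      subst hs2
      omega
    · refine not_one s hs ?_
      have := (hlm.mul_left 3).sub (hsm.mul_left 2)
      rwa [show 3 * (2 * m + 1) - 2 * (3 * m + 1) = 1 by ring] at this
    · refine not_one s hs ?_
      have := htm.sub hsm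
      rwa [show 3 * m + 2 - (3 * m + 1) = 1 by ring] at this
  · rcases hall s hs hsN with rfl | rfl | rfl | rfl <;> tauto
  · rcases h2 with h2 | ⟨rfl, -⟩
    · exact absurd h2N h2
    · exact hpm
  · rcases hall 3 (by norm_num) h3N with rfl | rfl | rfl | rfl <;> omega
  · rintro ⟨h5N, h5m⟩
    rcases hall 3 (by norm_num) h3N with rfl | rfl | rfl | rfl
    · rcases hall 5 (by norm_num) h5N with h | rfl | rfl | rfl <;> omega
    all_goals omega

/-- Two distinct uncovered disks never satisfy the pole inclusion, if `2/3` is blocked. -/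
theorem pole_not_mem_of_two_thirds {N : ℕ} (hN0 : N ≠ 0)
    (hω : N.primeFactors.card ≤ 3 ∨ (N.primeFactors.card = 4 ∧ Odd N)) {m k b l d : ℤ}
    (h : Uncovered N m k b) (h' : Uncovered N m l d) (hb : 3 ≤ b) (hd : 3 ≤ d)
    (h23 : ¬ IsCoprime (3 * m + 2) (N : ℤ)) (hdb : d < b) :
    ¬ (k * d - b * l) ^ 2 + d ^ 2 ≤ b ^ 2 := by
  obtain ⟨h13, hcov, h2, h3⟩ := prime_cover_of_card hN0 hω h.not_isCoprime_zero
    h.not_isCoprime_one (h.not_isCoprime_half hb) h23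
  have e1 := h.eq_or_eq_of_prime_cover hb h13 h23 hcov h2 h3
  have e2 := h'.eq_or_eq_of_prime_cover hd h13 h23 hcov h2 h3
  split_ifs at e1 e2
  all_goals
    rcases e1 with ⟨rfl, rfl⟩ | ⟨rfl, rfl⟩ <;> rcases e2 with ⟨rfl, rfl⟩ | ⟨rfl, rfl⟩ <;>
      omega

theorem pole_not_mem {N : ℕ} (hN0 : N ≠ 0)
    (hω : N.primeFactors.card ≤ 3 ∨ (N.primeFactors.card = 4 ∧ Odd N)) {m k b l d : ℤ}
    (h : Uncovered N m k b) (h' : Uncovered N m l d) (hdb : d < b) :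
    ¬ (k * d - b * l) ^ 2 + d ^ 2 ≤ b ^ 2 := by
  have hl0 := h'.1
  have hl1 := h'.2.1
  have hb : 3 ≤ b := by omega
  have hd : 3 ≤ d := by
    by_contra hlt
    obtain rfl : d = 2 := by omega
    obtain rfl : l = 1 := by omega
    exact h.not_isCoprime_half hb h'.2.2.2.1
  by_cases h23 : IsCoprime (3 * m + 2) (N : ℤ)
  · by_cases h13 : IsCoprime (3 * m + 1) (N : ℤ)
    · exfalso
      rcases le_total (2 * k) b with hk | hk
      · have := h.lt_half hb h13 hk
        omega
      · have := h.gt_half hb h23 hk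
        omega
    · have := pole_not_mem_of_two_thirds hN0 hω h.reflect h'.reflect hb hd (by
        intro hc
        apply h13
        have := hc.neg_left
        rwa [show -(3 * (-m - 1) + 2) = 3 * m + 1 by ring] at this) hdb
      rwa [show (b - k) * d - b * (d - l) = -(k * d - b * l) by ring, neg_sq] at this
  · exact pole_not_mem_of_two_thirds hN0 hω h h' hb hd h23 hdb

/-- A disk of a member of `S_N` does not contain the pole of another one, for such `N`. -/
theorem northPole_notMem_disk {N : ℕ} (hN : 1 < N)
    (hω : N.primeFactors.card ≤ 3 ∨ (N.primeFactors.card = 4 ∧ Odd N)) {α β : ℚ}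
    (hα : α ∈ SSet N) (hβ : β ∈ SSet N) (hne : β ≠ α) : northPole α ∉ disk β := by
  obtain ⟨m, k, b, hm0, hm1, hk0, -, hb, hαd, hαv, haN, hkb, hα'⟩ := uncovered_of_mem_SSet hN hα
  obtain ⟨n, l, d, hn0, hn1, hl0, hl1, hd, hβd, hβv, hcN, hld, hβ'⟩ := uncovered_of_mem_SSet hN hβ
  rw [mem_disk_iff, northPole_re, northPole_im, hαd, hβd, hαv, hβv]
  intro hle
  have hNR : (0 : ℝ) < N := by exact_mod_cast (by omega : 0 < N)
  have hbR : (0 : ℝ) < b := by exact_mod_cast hb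
  have hdR : (0 : ℝ) < d := by exact_mod_cast hd
  have hle' : ((b * m + k) * d - (d * n + l) * b) ^ 2 + d ^ 2 ≤ b ^ 2 := by
    have h1 : (((b * m + k) * d - (d * n + l) * b) ^ 2 + d ^ 2 : ℝ) ≤ b ^ 2 := by
      have := mul_le_mul_of_nonneg_left hle (show (0 : ℝ) ≤ (N * b * d) ^ 2 by positivity)
      have e1 : (N * b * d : ℝ) ^ 2 * (((b * m + k) / (N * b) - (d * n + l) / (N * d)) ^ 2 +
          (1 / (N * b)) ^ 2) = ((b * m + k) * d - (d * n + l) * b) ^ 2 + d ^ 2 := by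
        field_simp
      have e2 : (N * b * d : ℝ) ^ 2 * (1 / (N * d)) ^ 2 = b ^ 2 := by
        field_simp
      rwa [e1, e2] at this
    exact_mod_cast h1
  have he : (b * m + k) * d - (d * n + l) * b ≠ 0 := by
    intro h0
    apply hne
    have : (β : ℝ) = α := by
      rw [hαv, hβv]
      have h1 : ((b * m + k) * d - (d * n + l) * b : ℝ) = 0 := by exact_mod_cast h0
      field_simp
      linarith
    exact_mod_cast this
  have hdb : d < b := by
    have := sq_pos_of_ne_zero he
    by_contra! h
    nlinarith
  have hU := hα' (by omega)
  have hk0' := hU.1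
  have hk1' := hU.2.1
  have habs : |(b * m + k) * d - (d * n + l) * b| < b :=
    abs_lt_of_sq_lt_sq (by nlinarith) hb.le
  rw [abs_lt] at habs
  rcases eq_or_lt_of_le (show 1 ≤ d by omega) with hd1 | hd1
  · subst hd1
    obtain rfl : l = 0 := by omega
    have h1 : -2 < m - n := by nlinarith
    have h2 : m - n < 1 := by nlinarith
    obtain rfl | rfl : n = m ∨ n = m + 1 := by omega
    · exact hU.not_isCoprime_zero (by simpa using hcN)
    · exact hU.not_isCoprime_one (by simpa using hcN)
  · have hV := hβ' hd1
    have hl0' := hV.1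
    have h1 : n ≤ m := by
      by_contra! h
      nlinarith [mul_le_mul_of_nonneg_left (show m + 1 ≤ n by omega) (mul_pos hb hd).le]
    have h2 : m ≤ n := by
      by_contra! h
      nlinarith [mul_le_mul_of_nonneg_left (show n + 1 ≤ m by omega) (mul_pos hb hd).le]
    obtain rfl : n = m := le_antisymm h1 h2
    refine pole_not_mem (by omega) hω hU hV hdb ?_
    rwa [show k * d - b * l = (b * n + k) * d - (d * n + l) * b by ring]

theorem cN_eq_zero {N : ℕ} (hN : 1 < N)
    (hω : N.primeFactors.card ≤ 3 ∨ (N.primeFactors.card = 4 ∧ Odd N)) : cN N = 0 := by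
  have hzero : ∀ n ∈ poleComplexity (SSet N) '' SSet N, n = 0 := by
    rintro _ ⟨α, hα, rfl⟩
    have : {β ∈ SSet N | β ≠ α ∧ northPole α ∈ disk β} = ∅ := by
      ext β
      simp only [Set.mem_ofPred_eq, Set.mem_empty_iff_false, iff_false]
      rintro ⟨hβ, hne, hmem⟩
      exact northPole_notMem_disk hN hω hα hβ hne hmem
    rw [poleComplexity, this, Set.ncard_empty]
  exact Nat.le_zero.1 (csSup_le' fun n hn => (hzero n hn).le)

/-- Consecutive Farey fractions of order `M` around a reduced fraction of larger denominator. -/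
theorem exists_farey_neighbors {k b : ℤ} (hkb : IsCoprime k b) (hk0 : 0 < k) (hk1 : k < b) (M : ℕ)
    (hM : 1 ≤ M) (hMb : M < b) :
    ∃ r s r' s' u v : ℤ, r' * s - r * s' = 1 ∧ 0 < s ∧ s ≤ M ∧ 0 < s' ∧ s' ≤ M ∧ M < s + s' ∧
      0 < u ∧ 0 < v ∧ 0 ≤ r ∧ r ≤ s ∧ 0 ≤ r' ∧ r' ≤ s' ∧ k = u * r + v * r' ∧
      b = u * s + v * s' := by
  induction M, hM using Nat.le_induction with
  | base => exact ⟨0, 1, 1, 1, b - k, k, by norm_num, by norm_num, by norm_num, by norm_num,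
      by norm_num, by norm_num, by omega, by omega, by norm_num, by norm_num, by norm_num,
      by norm_num, by ring, by ring⟩
  | succ M hM ih =>
    push_cast at hMb ⊢
    obtain ⟨r, s, r', s', u, v, hdet, hs, hsM, hs', hsM', hss, hu, hv, hr, hrs, hr', hrs', hk, hb⟩ :=
      ih (by omega)
    rcases eq_or_lt_of_le (show (M : ℤ) + 1 ≤ s + s' by omega) with hM' | hM'
    · rcases lt_trichotomy u v with huv | huv | huv
      · exact ⟨r + r', s + s', r', s', u, v - u, by linarith, by omega, by omega, by omega,
          by omega, by omega, by omega, by omega, by omega, by omega, by omega, by omega,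
          by rw [hk]; ring, by rw [hb]; ring⟩
      · exfalso
        subst huv
        have hud : IsUnit u := hkb.isUnit_of_dvd' ⟨r + r', by rw [hk]; ring⟩
          ⟨s + s', by rw [hb]; ring⟩
        rw [Int.isUnit_iff] at hud
        obtain rfl : u = 1 := by omega
        omega
      · exact ⟨r, s, r + r', s + s', u - v, v, by linarith, by omega, by omega, by omega,
          by omega, by omega, by omega, by omega, by omega, by omega, by omega, by omega,
          by rw [hk]; ring, by rw [hb]; ring⟩
    · exact ⟨r, s, r', s', u, v, hdet, hs, by omega, hs', by omega, by omega, hu, hv, hr, hrs,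
        hr', hrs', hk, hb⟩

/-- A member of the progression `x + t y` prime to `N`, with `t` bounded by `N`. -/
theorem exists_isCoprime_add_mul {N : ℕ} (hN : 0 < N) {x y : ℤ} (hxy : IsCoprime x y) :
    ∃ t : ℤ, 1 ≤ t ∧ t ≤ N ∧ IsCoprime (x + t * y) (N : ℤ) := by
  classical
  let t : ℕ := ∏ p ∈ N.primeFactors with ¬ ((p : ℕ) : ℤ) ∣ x, p
  have hdvd : t ∣ N := (Finset.prod_dvd_prod_of_subset _ _ _ (Finset.filter_subset _ _)).trans
    (Nat.prod_primeFactors_dvd N)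
  refine ⟨t, ?_, by exact_mod_cast Nat.le_of_dvd hN hdvd, ?_⟩
  · have := Nat.pos_of_dvd_of_pos hdvd hN
    omega
  · refine isCoprime_natCast_of_forall_prime fun p hp hpN hpx => ?_
    have hpZ : Prime (p : ℤ) := Nat.prime_iff_prime_int.1 hp
    by_cases hx : (p : ℤ) ∣ x
    · rcases hpZ.dvd_or_dvd ((dvd_add_right hx).1 hpx) with h | h
      · have h' : p ∣ t := by exact_mod_cast h
        obtain ⟨q, hq, hpq⟩ := (hp.prime.dvd_finsetProd_iff _).1 h'
        rw [Finset.mem_filter, Nat.mem_primeFactors] at hq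
        rw [Nat.prime_dvd_prime_iff_eq hp hq.1.1] at hpq
        subst hpq
        exact hq.2 hx
      · exact hpZ.not_isUnit (hxy.isUnit_of_dvd' hx h)
    · refine hx ((dvd_add_left (Dvd.dvd.mul_right ?_ y)).1 hpx)
      have : p ∣ t := Finset.dvd_prod_of_mem _
        (Finset.mem_filter.2 ⟨Nat.mem_primeFactors.2 ⟨hp, hpN, by omega⟩, hx⟩)
      exact_mod_cast this

/-- Uncovered disks have bounded denominators. -/
theorem Uncovered.le_bound {N : ℕ} (hN : 0 < N) {m k b : ℤ} (h : Uncovered N m k b) :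
    b ≤ 2 * (N * N + N) * (2 * N) := by
  by_contra! hlt
  have hN' : (1 : ℤ) ≤ N := by exact_mod_cast hN
  obtain ⟨r, s, r', s', u, v, hdet, hs, hsM, hs', hsM', hss, hu, hv, hr, hrs, hr', hrs', hk, hb⟩ :=
    exists_farey_neighbors h.2.2.1 h.1 h.2.1 (2 * N) (by omega) (by push_cast; nlinarith)
  push_cast at hsM hsM' hss
  have hcop : IsCoprime (s * m + r) (s' * m + r') :=
    ⟨-s', s, by linear_combination hdet⟩
  obtain ⟨t, ht1, htN, hc⟩ := exists_isCoprime_add_mul hN hcop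
  obtain ⟨t', ht1', htN', hc'⟩ := exists_isCoprime_add_mul hN hcop.symm
  have right : N < v → u * t - v ≤ (u - 1) * s + (v - t) * s' → False := by
    intro hv' hle
    have e : k * (s + t * s') - b * (r + t * r') = v - u * t := by
      rw [hk, hb]; linear_combination (v - u * t) * hdet
    have h1 : 0 ≤ (u - 1) * s := mul_nonneg (by omega) hs.le
    have h2 : 0 < (v - t) * s' := mul_pos (by omega) hs'
    have h3 : v - t ≤ (v - t) * s' := le_mul_of_one_le_right (by omega) hs'
    have h4 : t ≤ u * t := le_mul_of_one_le_left (by omega) hu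
    refine h.not_covered (l := r + t * r') (d := s + t * s') (by positivity) (by positivity)
      (by gcongr) (by rw [hb]; linarith) ?_ (by rw [e, hb]; linarith) ?_
    · rwa [show (s + t * s') * m + (r + t * r') = s * m + r + t * (s' * m + r') by ring]
    · rw [show b * (r + t * r') - k * (s + t * s') = u * t - v by linarith, hb]
      linarith
  have left : N < u → v * t' - u ≤ (v - 1) * s' + (u - t') * s → False := by
    intro hu' hle
    have e : k * (s' + t' * s) - b * (r' + t' * r) = v * t' - u := by
      rw [hk, hb]; linear_combination (v * t' - u) * hdet
    have h1 : 0 ≤ (v - 1) * s' := mul_nonneg (by omega) hs'.le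
    have h2 : 0 < (u - t') * s := mul_pos (by omega) hs
    have h3 : u - t' ≤ (u - t') * s := le_mul_of_one_le_right (by omega) hs
    have h4 : t' ≤ v * t' := le_mul_of_one_le_left (by omega) hv
    refine h.not_covered (l := r' + t' * r) (d := s' + t' * s) (by positivity) (by positivity)
      (by gcongr) (by rw [hb]; linarith) ?_ (by rw [e, hb]; linarith) ?_
    · rwa [show (s' + t' * s) * m + (r' + t' * r) = s' * m + r' + t' * (s * m + r) by ring]
    · rw [show b * (r' + t' * r) - k * (s' + t' * s) = u - v * t' by linarith, hb]
      linarith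
  rcases le_or_gt u N with hu' | hu'
  · rcases le_or_gt v (N * N + N) with hv' | hv'
    · nlinarith [mul_le_mul hu' hsM hs.le (by omega), mul_le_mul hv' hsM' hs'.le (by positivity)]
    · refine right (by nlinarith) ?_
      have h1 : 0 ≤ (u - 1) * s := mul_nonneg (by omega) hs.le
      have h2 : 0 ≤ (v - t) * s' := mul_nonneg (by nlinarith) hs'.le
      nlinarith [mul_le_mul hu' htN (by omega) (by omega)]
  · rcases le_or_gt v N with hv' | hv'
    · rcases le_or_gt u (N * N + N) with hu'' | hu''
      · nlinarith [mul_le_mul hu'' hsM hs.le (by positivity), mul_le_mul hv' hsM' hs'.le (by omega)]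
      · refine left (by nlinarith) ?_
        have h1 : 0 ≤ (v - 1) * s' := mul_nonneg (by omega) hs'.le
        have h2 : 0 ≤ (u - t') * s := mul_nonneg (by nlinarith) hs.le
        nlinarith [mul_le_mul hv' htN' (by omega) (by omega)]
    · rcases le_or_gt (N : ℤ) s with hsN | hsN
      · refine right hv' ?_
        have h2 : 0 ≤ (v - t) * s' := mul_nonneg (by omega) hs'.le
        nlinarith [mul_le_mul_of_nonneg_left (htN.trans hsN) (show 0 ≤ u - 1 by omega)]
      · refine left hu' ?_
        have h2 : 0 ≤ (u - t') * s := mul_nonneg (by omega) hs.le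
        nlinarith [mul_le_mul_of_nonneg_left (htN'.trans (show (N : ℤ) ≤ s' by omega))
          (show 0 ≤ v - 1 by omega)]

theorem finite_SSet {N : ℕ} (hN : 1 < N) : (SSet N).Finite := by
  have hbound : ∃ B : ℤ, ∀ α ∈ SSet N, ∃ c b : ℤ, (α : ℝ) = c / (N * b) ∧
      c ∈ Set.Icc 0 B ∧ b ∈ Set.Icc 0 B := by
    set B : ℤ := 2 * (N * N + N) * (2 * N) with hB
    refine ⟨N * (B + 1), fun α hα => ?_⟩
    obtain ⟨m, k, b, hm0, hm1, hk0, hk1, hb, -, hval, -, -, hU⟩ := uncovered_of_mem_SSet hN hα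
    have hbB : b ≤ B + 1 := by
      rcases eq_or_lt_of_le (show 1 ≤ b by omega) with h | h
      · have : 0 ≤ B := by positivity
        omega
      · have := (hU h).le_bound (by omega)
        omega
    have hNZ : (1 : ℤ) ≤ N := by omega
    refine ⟨b * m + k, b, by rw [hval]; push_cast; rfl, ⟨by positivity, ?_⟩, hb.le, ?_⟩
    · nlinarith [mul_le_mul_of_nonneg_left (show m + 1 ≤ N by omega) hb.le]
    · nlinarith
  obtain ⟨B, hB⟩ := hbound
  refine (((Set.finite_Icc 0 B).prod (Set.finite_Icc 0 B)).image
    (fun p : ℤ × ℤ => (p.1 / (N * p.2) : ℚ))).subset fun α hα => ?_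
  obtain ⟨c, b, hval, hc, hb⟩ := hB α hα
  refine ⟨(c, b), ⟨hc, hb⟩, ?_⟩
  have : (((c / (N * b) : ℚ)) : ℝ) = (α : ℝ) := by rw [hval]; push_cast; rfl
  exact_mod_cast this

/-- Criterion for membership in `S_N`: a point of the disk of `l/d` (in the coordinate `N z - m`)
avoided by all the other disks. -/
theorem mem_SSet_of_point {N : ℕ} (hN : 0 < N) {m l d : ℤ} (hm0 : 0 ≤ m) (hm1 : m < N) (hd : 0 < d)
    (hl0 : 0 ≤ l) (hl1 : l ≤ d) (hld : IsCoprime l d) (hc : IsCoprime (d * m + l) (N : ℤ)) (x y : ℝ)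
    (hxy : (x - l / d) ^ 2 + y ^ 2 ≤ (1 / d : ℝ) ^ 2)
    (h : ∀ l' d' : ℤ, 0 < d' → IsCoprime (d' * m + l') (N : ℤ) → l' * d ≠ l * d' →
      (1 / d' : ℝ) ^ 2 < (x - l' / d') ^ 2 + y ^ 2) :
    ((d * m + l : ℤ) / (N * d) : ℚ) ∈ SSet N := by
  have hNR : (0 : ℝ) < N := by exact_mod_cast hN
  have hdR : (0 : ℝ) < d := by exact_mod_cast hd
  obtain ⟨hα, -, hαd⟩ := div_mem_cand hN hd hc (by positivity)
    (by nlinarith [mul_le_mul_of_nonneg_left (show m + 1 ≤ N by omega) hd.le])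
  replace hαd := hαd (by
    rw [add_comm]
    exact IsCoprime.add_mul_left_left_iff.2 hld)
  have hαv : ((((d * m + l : ℤ) / (N * d) : ℚ)) : ℝ) = (d * m + l) / (N * d) := by
    push_cast; rfl
  refine ⟨hα, fun hcov => ?_⟩
  generalize ((d * m + l : ℤ) / (N * d) : ℚ) = α at *
  have hz : (⟨(x + m) / N, y / N⟩ : ℂ) ∈ disk α := by
    rw [mem_disk_iff, hαd, hαv]
    have e1 : ((x + m) / N - (d * m + l) / (N * d) : ℝ) = (x - l / d) / N := by
      field_simp; ring
    have e2 : (1 / (N * d) : ℝ) = 1 / d / N := by field_simp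
    simp only
    rw [e1, e2, div_pow, div_pow, div_pow, ← add_div]
    gcongr
  obtain ⟨β, ⟨hβ, hβα⟩, hzβ⟩ := Set.mem_iUnion₂.1 (hcov hz)
  obtain ⟨c, b, hb, hβd, hcN, -, -, -, hβv⟩ := exists_coords_of_mem_cand hβ
  have hbR : (0 : ℝ) < b := by exact_mod_cast hb
  have key := h (c - b * m) b hb (by simpa using hcN) (by
    intro he
    apply hβα
    have heR : ((c - b * m) * d : ℝ) = l * b := by exact_mod_cast he
    have : (β : ℝ) = α := by
      rw [hβv, hαv]
      field_simp
      linarith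
    exact_mod_cast this)
  rw [mem_disk_iff, hβd, hβv] at hzβ
  have e1 : ((x + m) / N - c / (N * b) : ℝ) = (x - (c - b * m : ℤ) / b) / N := by
    push_cast
    field_simp
    ring
  have e2 : (1 / (N * b) : ℝ) = 1 / b / N := by field_simp
  simp only at hzβ
  rw [e1, e2, div_pow, div_pow, div_pow, ← add_div, div_le_div_iff_of_pos_right (by positivity)]
    at hzβ
  linarith

theorem exists_forall_prime_dvd {N : ℕ} (hN : N ≠ 0) (j i : ℕ → ℤ)
    (hj : ∀ p : ℕ, p.Prime → p ∣ N → ¬ (p : ℤ) ∣ j p) :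
    ∃ m : ℤ, 0 ≤ m ∧ m < N ∧ ∀ p : ℕ, p.Prime → p ∣ N → (p : ℤ) ∣ j p * m + i p := by
  have hres : ∀ p : ℕ, ∃ a : ℕ, p.Prime → p ∣ N → (p : ℤ) ∣ j p * a + i p := by
    intro p
    by_cases hp : p.Prime ∧ p ∣ N
    · have hcop : IsCoprime (p : ℤ) (j p) :=
        ((Nat.prime_iff_prime_int.1 hp.1).coprime_iff_not_dvd).2 (hj p hp.1 hp.2)
      obtain ⟨u, v, huv⟩ := hcop
      have hp0 : (p : ℤ) ≠ 0 := by exact_mod_cast hp.1.ne_zero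
      refine ⟨((-(v * i p)) % p).toNat, fun _ _ => ?_⟩
      rw [Int.toNat_of_nonneg (Int.emod_nonneg _ hp0), Int.emod_def]
      exact ⟨i p * u - j p * (-(v * i p) / p), by linear_combination (-i p) * huv⟩
    · exact ⟨0, fun h1 h2 => absurd ⟨h1, h2⟩ hp⟩
  choose a ha using hres
  obtain ⟨m, hm⟩ := Nat.chineseRemainderOfFinset a id N.primeFactors
    (fun p hp => (Nat.prime_of_mem_primeFactors hp).ne_zero)
    (fun p hp q hq hpq => (Nat.coprime_primes (Nat.prime_of_mem_primeFactors hp)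
      (Nat.prime_of_mem_primeFactors hq)).2 hpq)
  have hNpos : (0 : ℤ) < N := by omega
  refine ⟨(m : ℤ) % N, Int.emod_nonneg _ hNpos.ne', Int.emod_lt_of_pos _ hNpos,
    fun p hp hpN => ?_⟩
  have h1 : (p : ℤ) ∣ m - a p :=
    (Int.natCast_modEq_iff.2 (hm p (Nat.mem_primeFactors.2 ⟨hp, hpN, hN⟩))).symm.dvd
  have h2 : (p : ℤ) ∣ (m : ℤ) % N - m := by
    rw [Int.emod_def]
    exact ((Int.natCast_dvd_natCast.2 hpN).mul_right (m / N)).neg_right.trans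
      (dvd_of_eq (by ring))
  have := ((h1.add h2).mul_left (j p)).add (ha p hp hpN)
  rwa [show j p * ((m : ℤ) - a p + ((m : ℤ) % N - m)) + (j p * a p + i p) =
    j p * ((m : ℤ) % N) + i p by ring] at this

theorem dvd_of_linear_combination {k a b n : ℤ} (ha : k ∣ a) (hb : k ∣ b) (u v : ℤ)
    (h : u * a + v * b = n) : k ∣ n :=
  h ▸ (ha.mul_left u).add (hb.mul_left v)

theorem isCoprime_quarter_and_two_fifths {N : ℕ} {m : ℤ}
    (h : ∀ x : ℕ, x.Prime → x ∣ N → ((x : ℤ) ∣ 3 * m + 2 ∧ x ≠ 2 ∧ x ≠ 3 ∧ x ≠ 5) ∨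
      ((x : ℤ) ∣ m ∧ x ≠ 2) ∨ ((x : ℤ) ∣ m + 1 ∧ x ≠ 3) ∨ (x : ℤ) ∣ 3 * m + 1 ∨
      (x : ℤ) ∣ 2 * m + 1) :
    IsCoprime (4 * m + 1) (N : ℤ) ∧ IsCoprime (5 * m + 2) (N : ℤ) := by
  constructor
  · refine isCoprime_natCast_of_forall_prime fun x hx hxN hxz => ?_
    rcases h x hx hxN with ⟨hd, h2, h3, h5⟩ | ⟨hd, h2⟩ | ⟨hd, h3⟩ | hd | hd
    · have := dvd_of_linear_combination hd hxz 4 (-3) (n := 5) (by ring)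
      rcases prime_eq_of_dvd_small hx (by norm_num) (by norm_num) this with h | h | h <;> omega
    · have := dvd_of_linear_combination hd hxz (-4) 1 (n := 1) (by ring)
      exact hx.not_dvd_one (by exact_mod_cast this)
    · have := dvd_of_linear_combination hd hxz 4 (-1) (n := 3) (by ring)
      exact h3 ((Nat.prime_dvd_prime_iff_eq hx Nat.prime_three).1 (by exact_mod_cast this))
    · have := dvd_of_linear_combination hd hxz 4 (-3) (n := 1) (by ring)
      exact hx.not_dvd_one (by exact_mod_cast this)
    · have := dvd_of_linear_combination hd hxz 2 (-1) (n := 1) (by ring)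
      exact hx.not_dvd_one (by exact_mod_cast this)
  · refine isCoprime_natCast_of_forall_prime fun x hx hxN hxz => ?_
    rcases h x hx hxN with ⟨hd, h2, h3, h5⟩ | ⟨hd, h2⟩ | ⟨hd, h3⟩ | hd | hd
    · have := dvd_of_linear_combination hd hxz 5 (-3) (n := 4) (by ring)
      rcases prime_eq_of_dvd_small hx (by norm_num) (by norm_num) this with h | h | h <;> omega
    · have := dvd_of_linear_combination hd hxz (-5) 1 (n := 2) (by ring)
      exact h2 ((Nat.prime_dvd_prime_iff_eq hx Nat.prime_two).1 (by exact_mod_cast this))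
    · have := dvd_of_linear_combination hd hxz 5 (-1) (n := 3) (by ring)
      exact h3 ((Nat.prime_dvd_prime_iff_eq hx Nat.prime_three).1 (by exact_mod_cast this))
    · have := dvd_of_linear_combination hd hxz (-5) 3 (n := 1) (by ring)
      exact hx.not_dvd_one (by exact_mod_cast this)
    · have := dvd_of_linear_combination hd hxz 5 (-2) (n := 1) (by ring)
      exact hx.not_dvd_one (by exact_mod_cast this)

/-- The arithmetic configuration in which `0, 1/3, 1/2, 2/3, 1` are blocked while `1/4` and `2/5`
are available, assembled from a suitable assignment of the prime factors. -/
theorem exists_config_of_primes {N : ℕ} (hN : N ≠ 0) {p q r s t : ℕ} (hp : p ∈ N.primeFactors)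
    (hq : q ∈ N.primeFactors) (hr : r ∈ N.primeFactors) (hs : s ∈ N.primeFactors)
    (ht : t ∈ N.primeFactors) (hp2 : p ≠ 2) (hp3 : p ≠ 3) (hp5 : p ≠ 5) (hq2 : q ≠ 2)
    (hr3 : r ≠ 3) (hs3 : s ≠ 3) (hpq : p ≠ q) (hpr : p ≠ r) (hqr : q ≠ r) (hps : p ≠ s)
    (hqs : q ≠ s) (hrs : r = s → r = 2) (htp : t ≠ p) (htq : t ≠ q) (htr : t ≠ r) (hts : t ≠ s)
    (h2 : 2 ∣ N → r = 2) :
    ∃ m : ℤ, 0 ≤ m ∧ m < N ∧ ¬ IsCoprime m (N : ℤ) ∧ ¬ IsCoprime (m + 1) (N : ℤ) ∧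
      ¬ IsCoprime (2 * m + 1) (N : ℤ) ∧ ¬ IsCoprime (3 * m + 1) (N : ℤ) ∧
      ¬ IsCoprime (3 * m + 2) (N : ℤ) ∧ IsCoprime (4 * m + 1) (N : ℤ) ∧
      IsCoprime (5 * m + 2) (N : ℤ) := by
  let f : ℕ → ℤ × ℤ := fun x => if x = p then (3, 2) else if x = q then (1, 0) else
    if x = r then (1, 1) else if x = s then (3, 1) else (2, 1)
  have not_three : ∀ x : ℕ, x.Prime → x ≠ 3 → ¬ (x : ℤ) ∣ 3 := fun x hx h3 h =>
    h3 ((Nat.prime_dvd_prime_iff_eq hx Nat.prime_three).1 (by exact_mod_cast h))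
  have not_one : ∀ x : ℕ, x.Prime → ¬ (x : ℤ) ∣ 1 := fun x hx h => by
    have : x ∣ 1 := by exact_mod_cast h
    exact hx.one_lt.ne' (Nat.dvd_one.1 this)
  obtain ⟨m, hm0, hm1, hm⟩ := exists_forall_prime_dvd hN (fun x => (f x).1) (fun x => (f x).2) (by
    intro x hx hxN
    simp only [f]
    split_ifs with c1 c2 c3 c4
    · exact not_three x hx (c1 ▸ hp3)
    · exact not_one x hx
    · exact not_one x hx
    · exact not_three x hx (c4 ▸ hs3)
    · intro (h : (x : ℤ) ∣ 2)
      have : x = 2 := (Nat.prime_dvd_prime_iff_eq hx Nat.prime_two).1 (by exact_mod_cast h)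
      subst this
      exact c3 (h2 hxN).symm)
  have blocked : ∀ {x : ℕ} {z : ℤ}, x ∈ N.primeFactors → (x : ℤ) ∣ z → ¬ IsCoprime z (N : ℤ) := by
    intro x z hx hxz hc
    rw [Nat.mem_primeFactors] at hx
    exact (Nat.prime_iff_prime_int.1 hx.1).not_isUnit
      (hc.isUnit_of_dvd' hxz (Int.natCast_dvd_natCast.2 hx.2.1))
  have hm' : ∀ x ∈ N.primeFactors, (x : ℤ) ∣ (f x).1 * m + (f x).2 := fun x hx => by
    rw [Nat.mem_primeFactors] at hx
    exact hm x hx.1 hx.2.1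
  have ep := hm' p hp
  have eq := hm' q hq
  have er := hm' r hr
  have es := hm' s hs
  have et := hm' t ht
  simp only [f, if_true, if_neg hpq.symm, if_neg hpr.symm, if_neg hqr.symm, if_neg htp, if_neg htq,
    if_neg htr, if_neg hts, if_neg hps.symm, if_neg hqs.symm] at ep eq er es et
  obtain ⟨h14, h25⟩ := isCoprime_quarter_and_two_fifths (m := m) fun x hx hxN => by
    have hfx := hm x hx hxN
    simp only [f] at hfx
    split_ifs at hfx with c1 c2 c3 c4
    · exact .inl ⟨hfx, c1 ▸ hp2, c1 ▸ hp3, c1 ▸ hp5⟩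
    · exact .inr (.inl ⟨by simpa using hfx, c2 ▸ hq2⟩)
    · exact .inr (.inr (.inl ⟨by simpa using hfx, c3 ▸ hr3⟩))
    · exact .inr (.inr (.inr (.inl hfx)))
    · exact .inr (.inr (.inr (.inr hfx)))
  refine ⟨m, hm0, hm1, blocked hq (by simpa using eq), blocked hr (by simpa using er),
    blocked ht et, ?_, blocked hp ep, h14, h25⟩
  by_cases hc : r = s
  · obtain rfl := hrs hc
    rw [if_pos hc.symm] at es
    exact blocked hr (by omega)
  · rw [if_neg (Ne.symm hc)] at es
    exact blocked hs es

theorem exists_config {N : ℕ} (hN : N ≠ 0)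
    (hω : ¬ (N.primeFactors.card ≤ 3 ∨ (N.primeFactors.card = 4 ∧ Odd N))) :
    ∃ m : ℤ, 0 ≤ m ∧ m < N ∧ ¬ IsCoprime m (N : ℤ) ∧ ¬ IsCoprime (m + 1) (N : ℤ) ∧
      ¬ IsCoprime (2 * m + 1) (N : ℤ) ∧ ¬ IsCoprime (3 * m + 1) (N : ℤ) ∧
      ¬ IsCoprime (3 * m + 2) (N : ℤ) ∧ IsCoprime (4 * m + 1) (N : ℤ) ∧
      IsCoprime (5 * m + 2) (N : ℤ) := by
  have avoid : ∀ t : Finset ℕ, t.card < N.primeFactors.card → ∃ x ∈ N.primeFactors, x ∉ t :=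
    fun t ht => Finset.exists_mem_notMem_of_card_lt_card ht
  push Not at hω
  by_cases h2 : 2 ∣ N
  · have h2mem : 2 ∈ N.primeFactors := Nat.mem_primeFactors.2 ⟨Nat.prime_two, h2, hN⟩
    obtain ⟨p, hp, hp'⟩ := avoid {2, 3, 5} (by simp; omega)
    obtain ⟨q, hq, hq'⟩ := avoid {2, p} (lt_of_le_of_lt Finset.card_le_two (by omega))
    obtain ⟨t, ht, ht'⟩ := avoid {2, p, q} (lt_of_le_of_lt Finset.card_le_three (by omega))
    simp only [Finset.mem_insert, Finset.mem_singleton, not_or] at hp' hq' ht'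
    exact exists_config_of_primes hN hp hq h2mem h2mem ht (by omega) (by omega) (by omega)
      (by omega) (by omega) (by omega) (by omega) (by omega) (by omega) (by omega) (by omega)
      (by omega) (by omega) (by omega) (by omega) (by omega) (fun _ => rfl)
  · have hodd : Odd N := by
      rw [← Nat.not_even_iff_odd, even_iff_two_dvd]
      exact h2
    have hcard : 5 ≤ N.primeFactors.card := by
      have h4 : N.primeFactors.card ≠ 4 := fun h => hω.2 h hodd
      omega
    have ne_two : ∀ x ∈ N.primeFactors, x ≠ 2 := by
      rintro x hx rfl
      exact h2 (Nat.dvd_of_mem_primeFactors hx)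
    obtain ⟨p, hp, hp'⟩ := avoid {3, 5} (lt_of_le_of_lt Finset.card_le_two (by omega))
    obtain ⟨r, hr, hr'⟩ := avoid {3, p} (lt_of_le_of_lt Finset.card_le_two (by omega))
    obtain ⟨s, hs, hs'⟩ := avoid {3, p, r} (lt_of_le_of_lt Finset.card_le_three (by omega))
    obtain ⟨q, hq, hq'⟩ := avoid {p, r, s} (lt_of_le_of_lt Finset.card_le_three (by omega))
    obtain ⟨t, ht, ht'⟩ := avoid {p, q, r, s} (lt_of_le_of_lt Finset.card_le_four (by omega))
    simp only [Finset.mem_insert, Finset.mem_singleton, not_or] at hp' hq' hr' hs' ht'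
    have := ne_two p hp
    have := ne_two q hq
    exact exists_config_of_primes hN hp hq hr hs ht (by omega) (by omega) (by omega)
      (by omega) (by omega) (by omega) (by omega) (by omega) (by omega) (by omega) (by omega)
      (by omega) (by omega) (by omega) (by omega) (by omega) (fun h => absurd h h2)

theorem inv_sq_lt_of_one_lt {l d : ℤ} {x y : ℝ} (hd : 0 < d)
    (h : 1 < (x * d - l) ^ 2 + (y * d) ^ 2) : (1 / d : ℝ) ^ 2 < (x - l / d) ^ 2 + y ^ 2 := by
  have hdR : (0 : ℝ) < d := by exact_mod_cast hd
  have : (x - l / d) ^ 2 + y ^ 2 = ((x * d - l) ^ 2 + (y * d) ^ 2) * (1 / d : ℝ) ^ 2 := by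
    field_simp
  rw [this]
  exact lt_mul_of_one_lt_left (by positivity) h

theorem two_fifths_mem_quarter_pole {N : ℕ} (hN : 1 < N)
    (hω : ¬ (N.primeFactors.card ≤ 3 ∨ (N.primeFactors.card = 4 ∧ Odd N))) :
    ∃ α ∈ SSet N, ∃ β ∈ SSet N, β ≠ α ∧ northPole α ∈ disk β := by
  have hN0 : 0 < N := by omega
  have hNR : (0 : ℝ) < N := by exact_mod_cast hN0
  obtain ⟨m, hm0, hm1, h0, h1, h12, h13, h23, h14, h25⟩ := exists_config hN0.ne' hω
  have blocked : ∀ {x z : ℤ}, ¬ IsCoprime x (N : ℤ) → ∀ u, z = u * x → ¬ IsCoprime z (N : ℤ) :=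
    fun hx u hz hc => hx (hz ▸ hc).of_mul_left_right
  have h00 : ¬ IsCoprime (1 * m + 0) (N : ℤ) := by simpa using h0
  have h01 : ¬ IsCoprime (1 * m + 1) (N : ℤ) := by simpa using h1
  have hα := mem_SSet_of_point hN0 hm0 hm1 (l := 2) (d := 5) (by norm_num) (by norm_num)
    (by norm_num) (by norm_num) h25 (31 / 65) (12 / 65) (by norm_num) (by
      intro l d hd hc hne
      refine inv_sq_lt_of_one_lt hd ?_
      by_cases h6 : 6 ≤ d
      · have : (6 : ℝ) ≤ d := by exact_mod_cast h6
        nlinarith [sq_nonneg (31 / 65 * (d : ℝ) - l)]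
      · interval_cases d
        · obtain h | rfl | rfl | h : l ≤ -1 ∨ l = 0 ∨ l = 1 ∨ 2 ≤ l := by omega
          · have : (l : ℝ) ≤ -1 := by exact_mod_cast h
            push_cast; nlinarith
          · exact absurd hc h00
          · exact absurd hc h01
          · have : (2 : ℝ) ≤ l := by exact_mod_cast h
            push_cast; nlinarith
        · obtain h | rfl | rfl | h : l ≤ -1 ∨ l = 0 ∨ l = 1 ∨ 2 ≤ l := by omega
          · have : (l : ℝ) ≤ -1 := by exact_mod_cast h
            push_cast; nlinarith
          · exact absurd hc (blocked h0 2 (by ring))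
          · exact absurd hc h12
          · have : (2 : ℝ) ≤ l := by exact_mod_cast h
            push_cast; nlinarith
        · obtain h | rfl | rfl | h : l ≤ 0 ∨ l = 1 ∨ l = 2 ∨ 3 ≤ l := by omega
          · have : (l : ℝ) ≤ 0 := by exact_mod_cast h
            push_cast; nlinarith
          · exact absurd hc h13
          · exact absurd hc h23
          · have : (3 : ℝ) ≤ l := by exact_mod_cast h
            push_cast; nlinarith
        · obtain h | rfl | h : l ≤ 1 ∨ l = 2 ∨ 3 ≤ l := by omega
          · have : (l : ℝ) ≤ 1 := by exact_mod_cast h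
            push_cast; nlinarith
          · exact absurd hc (blocked h12 2 (by ring))
          · have : (3 : ℝ) ≤ l := by exact_mod_cast h
            push_cast; nlinarith
        · obtain h | rfl | h : l ≤ 1 ∨ l = 2 ∨ 3 ≤ l := by omega
          · have : (l : ℝ) ≤ 1 := by exact_mod_cast h
            push_cast; nlinarith
          · exact absurd rfl hne
          · have : (3 : ℝ) ≤ l := by exact_mod_cast h
            push_cast; nlinarith)
  have hβ := mem_SSet_of_point hN0 hm0 hm1 (l := 1) (d := 4) (by norm_num) (by norm_num)
    (by norm_num) (by norm_num) h14 (1 / 4) (1 / 4) (by norm_num) (by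
      intro l d hd hc hne
      refine inv_sq_lt_of_one_lt hd ?_
      by_cases h5 : 5 ≤ d
      · have : (5 : ℝ) ≤ d := by exact_mod_cast h5
        nlinarith [sq_nonneg (1 / 4 * (d : ℝ) - l)]
      · interval_cases d
        · obtain h | rfl | rfl | h : l ≤ -1 ∨ l = 0 ∨ l = 1 ∨ 2 ≤ l := by omega
          · have : (l : ℝ) ≤ -1 := by exact_mod_cast h
            push_cast; nlinarith
          · exact absurd hc h00
          · exact absurd hc h01
          · have : (2 : ℝ) ≤ l := by exact_mod_cast h
            push_cast; nlinarith
        · obtain h | rfl | rfl | h : l ≤ -1 ∨ l = 0 ∨ l = 1 ∨ 2 ≤ l := by omega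
          · have : (l : ℝ) ≤ -1 := by exact_mod_cast h
            push_cast; nlinarith
          · exact absurd hc (blocked h0 2 (by ring))
          · exact absurd hc h12
          · have : (2 : ℝ) ≤ l := by exact_mod_cast h
            push_cast; nlinarith
        · obtain h | rfl | rfl | h : l ≤ -1 ∨ l = 0 ∨ l = 1 ∨ 2 ≤ l := by omega
          · have : (l : ℝ) ≤ -1 := by exact_mod_cast h
            push_cast; nlinarith
          · exact absurd hc (blocked h0 3 (by ring))
          · exact absurd hc h13
          · have : (2 : ℝ) ≤ l := by exact_mod_cast h
            push_cast; nlinarith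
        · obtain h | rfl | h : l ≤ 0 ∨ l = 1 ∨ 2 ≤ l := by omega
          · have : (l : ℝ) ≤ 0 := by exact_mod_cast h
            push_cast; nlinarith
          · exact absurd rfl hne
          · have : (2 : ℝ) ≤ l := by exact_mod_cast h
            push_cast; nlinarith)
  have hNQ : (N : ℚ) ≠ 0 := by exact_mod_cast hN0.ne'
  refine ⟨_, hα, _, hβ, ?_, ?_⟩
  · intro h
    push_cast at h
    field_simp at h
    linarith
  · have hαd := (div_mem_cand hN0 (d := 5) (by norm_num) h25 (by omega) (by omega)).2.2 (by
      rw [add_comm]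
      exact IsCoprime.add_mul_left_left_iff.2 ⟨-2, 1, by norm_num⟩)
    have hβd := (div_mem_cand hN0 (d := 4) (by norm_num) h14 (by omega) (by omega)).2.2 (by
      rw [add_comm]
      exact IsCoprime.add_mul_left_left_iff.2 ⟨1, 0, by norm_num⟩)
    rw [mem_disk_iff, northPole_re, northPole_im, hαd, hβd]
    push_cast
    apply le_of_eq
    field_simp
    ring

theorem cN_ne_zero {N : ℕ} (hN : 1 < N)
    (hω : ¬ (N.primeFactors.card ≤ 3 ∨ (N.primeFactors.card = 4 ∧ Odd N))) : cN N ≠ 0 := by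
  obtain ⟨α, hα, β, hβ, hne, hmem⟩ := two_fifths_mem_quarter_pole hN hω
  have hfin := finite_SSet hN
  have hpos : 0 < poleComplexity (SSet N) α := by
    rw [poleComplexity, Set.ncard_pos (hfin.subset fun _ h => h.1)]
    exact ⟨β, hβ, hne, hmem⟩
  have hle : poleComplexity (SSet N) α ≤ cN N :=
    le_csSup (hfin.image _).bddAbove ⟨α, hα, rfl⟩
  omega

/-- Zagier-type classification: for `N > 1`, `c(N) = 0` iff `N` has at most three
distinct prime factors, or `N` is odd with exactly four distinct prime factors. -/
theorem complexity_eq_zero_iff (N : ℕ) (hN : 1 < N) :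
    cN N = 0 ↔ N.primeFactors.card ≤ 3 ∨ (N.primeFactors.card = 4 ∧ Odd N) := by
  exact ⟨fun h => by_contra fun hω => cN_ne_zero hN hω h, fun hω => cN_eq_zero hN hω⟩

end

end Paper
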